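/- Let G₁ and G₂ be featured graphs whose feature maps X_{G₁} : V(G₁) → F and X_{G₂} : V(G₂) → F are injective (unique node features). If the multisets of WL colours after one iteration agree, i.e. {{WL^1_v(G₁) : v ∈ V(G₁)}} = {{WL^1_w(G₂) : w ∈ V(G₂)}}, then G₁ and G₂ are isomorphic as featured graphs: there exists a graph isomorphism φ : G₁ → G₂ with X_{G₂}(φ(v)) = X_{G₁}(v) for all v ∈ V(G₁). -/

import Mathlib

/-! A colour contains the vertex's own feature, so each vertex of `G₁` has a vertex of `G₂` of the
same colour and hence the same feature; as features are injective, this matching is a bijection.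
It preserves adjacency because injectivity lets a colour determine the neighbourhood
(`FGraph.feat_mem_WL1_iff`): `v` is adjacent to `u` exactly when the feature of `u` occurs in the
multiset recorded by the colour of `v`. -/

/-- A featured graph: a finite simple graph on a finite set of natural-number
vertices together with a feature map. -/
structure FGraph (F : Type) where
  verts : Finset ℕ
  adj : ℕ → ℕ → Bool
  adj_symm : ∀ a b, adj a b = adj b a
  adj_irrefl : ∀ a, adj a a = false
  adj_mem : ∀ a b, adj a b = true → a ∈ verts ∧ b ∈ verts
  feat : ℕ → F

namespace FGraph

/-- The (open) neighbourhood of a vertex. -/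
def nbhd {F : Type} (G : FGraph F) (v : ℕ) : Finset ℕ :=
  G.verts.filter (fun u => G.adj v u)

/-- A feature-preserving isomorphism between two featured graphs: a bijection
`φ : V(G) → V(G')` preserving adjacency and features. -/
def Iso {F : Type} (G G' : FGraph F) : Prop :=
  ∃ φ : ℕ → ℕ, Set.BijOn φ ↑G.verts ↑G'.verts ∧
    (∀ a ∈ G.verts, ∀ b ∈ G.verts, G.adj a b = G'.adj (φ a) (φ b)) ∧
    (∀ a ∈ G.verts, G'.feat (φ a) = G.feat a)

/-- The WL colour of a vertex after one iteration:
`WL¹_v(G) = (X_G(v), {{X_G(u) : u ∈ N_G(v)}})`. -/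
def WL1 {F : Type} (G : FGraph F) (v : ℕ) : F × Multiset F :=
  (G.feat v, (G.nbhd v).val.map G.feat)

end FGraph

/-- With injective features, adjacency can be read off from the WL colour. -/
theorem FGraph.feat_mem_WL1_iff {F : Type} (G : FGraph F)
    (h : ∀ a ∈ G.verts, ∀ b ∈ G.verts, G.feat a = G.feat b → a = b)
    {v u : ℕ} (hu : u ∈ G.verts) :
    G.feat u ∈ (G.WL1 v).2 ↔ G.adj v u = true := by
  simp only [FGraph.WL1, FGraph.nbhd, Multiset.mem_map, Finset.mem_val, Finset.mem_filter]
  constructor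
  · rintro ⟨x, ⟨hx, hvx⟩, hxu⟩
    rwa [← h x hx u hu hxu]
  · exact fun hvu => ⟨u, ⟨hu, hvu⟩, rfl⟩

/-- **One WL iteration identifies graphs with unique node features.** If `G₁`
and `G₂` are featured graphs with injective feature maps and the multisets of
WL colours after one iteration agree, then `G₁` and `G₂` are isomorphic as
featured graphs (via a feature-preserving graph isomorphism). -/
theorem iso_of_WL1_eq_of_injective_features {F : Type} (G₁ G₂ : FGraph F)
    (h₁ : ∀ a ∈ G₁.verts, ∀ b ∈ G₁.verts, G₁.feat a = G₁.feat b → a = b)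
    (h₂ : ∀ a ∈ G₂.verts, ∀ b ∈ G₂.verts, G₂.feat a = G₂.feat b → a = b)
    (hWL : G₁.verts.val.map (G₁.WL1) = G₂.verts.val.map (G₂.WL1)) :
    G₁.Iso G₂ := by
  classical
  have ex : ∀ a ∈ G₁.verts, ∃ w ∈ G₂.verts, G₂.WL1 w = G₁.WL1 a := fun a ha =>
    Multiset.mem_map.1 (hWL ▸ Multiset.mem_map_of_mem G₁.WL1 ha)
  choose! φ hφ hcol using ex
  have hfeat : ∀ a ∈ G₁.verts, G₂.feat (φ a) = G₁.feat a := fun a ha =>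
    congrArg Prod.fst (hcol a ha)
  refine ⟨φ, ⟨hφ, ?_, ?_⟩, ?_, hfeat⟩
  · intro a ha b hb hab
    apply h₁ a ha b hb
    rw [← hfeat a ha, ← hfeat b hb, hab]
  · intro w hw
    obtain ⟨a, ha, haw⟩ : ∃ a ∈ G₁.verts, G₁.WL1 a = G₂.WL1 w :=
      Multiset.mem_map.1 (hWL ▸ Multiset.mem_map_of_mem G₂.WL1 hw)
    exact ⟨a, ha, h₂ _ (hφ a ha) _ hw ((hfeat a ha).trans (congrArg Prod.fst haw))⟩
  · intro a ha b hb
    rw [Bool.eq_iff_iff, ← G₁.feat_mem_WL1_iff h₁ hb,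
      ← G₂.feat_mem_WL1_iff h₂ (hφ b hb), hfeat b hb]
    exact iff_of_eq (congrArg (fun c => G₁.feat b ∈ c.2) (hcol a ha).symm)
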